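/- arXiv:1812.09753 — 2 statements merged into one kernel-verified Lean document; each statement's English description precedes it below -/
import Mathlib

section
/- Let n ≥ 2 and let K ⊆ S^n be a compact spherically convex set whose interior in S^n is nonempty. Suppose that for every unit vector u ∈ ℝ^{n+1} the two-point symmetrization τ_H(K) with respect to u is spherically convex. Then K is a closed geodesic ball: there exist z ∈ S^n and r ∈ (0, π/2) with K = B(z,r). -/
/-!
Let `C` be the cone over `K`. At densely many points of its boundary, `C` is touched from inside by
a ball, which determines the outer normal. Let `x ≠ y` be two such points on the unit sphere, with
outer unit normals `a` and `b`, and symmetrize with respect to `x - y`, so that the reflection `σ`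
exchanges `x` and `y`. Near `x` the symmetrized cone is `C ∪ σ C`, and `x` is still on its boundary;
being convex it has only one outer normal at `x`, so `σ b = a` and `a - b` is a multiple of `x - y`.
Three distinct points of a sphere are not collinear, so these multiples all agree and the normal is
`μ x + c` with constant `μ` and `c`. The normals of a cone satisfy `⟪a, x⟫ = 0`, whence
`⟪c, x⟫ = -μ` at all touched unit vectors: the boundary of `C` lies on one circular cone. Since the
inside and the outside of that circular cone are connected and `C` contains no line, `C` is its
inside.
-/

open MeasureTheory

noncomputable section

/-- Euclidean space `ℝ^{n+1}`. -/
abbrev Esp (n : ℕ) : Type := EuclideanSpace ℝ (Fin (n + 1))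

/-- The unit sphere `S^n ⊆ ℝ^{n+1}`, as a subtype. -/
abbrev Sph (n : ℕ) : Type := Metric.sphere (0 : Esp n) 1

/-- Geodesic distance `d(x,y) = arccos ⟨x,y⟩` on the sphere. -/
def gd {n : ℕ} (x y : Sph n) : ℝ :=
  Real.arccos (inner (𝕜 := ℝ) (x : Esp n) (y : Esp n))

/-- Closed geodesic ball `B(z,r) = {x ∈ Sⁿ : d(x,z) ≤ r}`. -/
def sphBall {n : ℕ} (z : Sph n) (r : ℝ) : Set (Sph n) := {x | gd x z ≤ r}

/-- Geodesic diameter `diam X = sup {d(x,y) : x, y ∈ X}`. -/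
def sphDiam {n : ℕ} (X : Set (Sph n)) : ℝ :=
  sSup {r | ∃ x ∈ X, ∃ y ∈ X, r = gd x y}

/-- Spherical volume: the `n`-dimensional (Hausdorff) surface measure on `S^n`. -/
def sphVol (n : ℕ) : Measure (Sph n) := μH[(n : ℝ)]

/-- `K ⊆ S^n` is spherically convex: it lies in an open hemisphere and the cone
`{t • x : t ≥ 0, x ∈ K}` is convex in `ℝ^{n+1}`. -/
def SphConvex {n : ℕ} (K : Set (Sph n)) : Prop :=
  (∃ w : Esp n, w ≠ 0 ∧ ∀ x ∈ K, 0 < inner (𝕜 := ℝ) (x : Esp n) w) ∧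
    Convex ℝ {p : Esp n | ∃ t : ℝ, 0 ≤ t ∧ ∃ x ∈ K, p = t • (x : Esp n)}

/-- Reflection of `ℝ^{n+1}` through the hyperplane orthogonal to `u`. -/
def reflMap {n : ℕ} (u : Esp n) (p : Esp n) : Esp n :=
  p - (2 * inner (𝕜 := ℝ) p u) • u

/-- Two-point symmetrization of `X ⊆ S^n` with respect to the unit vector `u`:
`τ_H(X) = ((X ∪ σ_H(X)) ∩ H⁺) ∪ ((X ∩ σ_H(X)) ∩ H⁻)` where
`H⁺ = {⟨x,u⟩ ≥ 0}`, `H⁻ = {⟨x,u⟩ ≤ 0}` and `σ_H` is the reflection through `u^⊥`. -/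
def twoPointSym {n : ℕ} (u : Esp n) (X : Set (Sph n)) : Set (Sph n) :=
  {x | (0 ≤ inner (𝕜 := ℝ) (x : Esp n) u ∧
          (x ∈ X ∨ reflMap u (x : Esp n) ∈ (((↑) '' X : Set (Esp n))))) ∨
       (inner (𝕜 := ℝ) (x : Esp n) u ≤ 0 ∧
          (x ∈ X ∧ reflMap u (x : Esp n) ∈ (((↑) '' X : Set (Esp n)))))}

section SphConvexTwoPointSym

open Metric Set Filter Topology
open scoped RealInnerProductSpace Pointwise

section InnerBall

variable {E : Type*} [NormedAddCommGroup E] [InnerProductSpace ℝ E] {S T : Set E} {x a b : E}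

/-- The unit vector `a` is an inner-ball normal of `T` at `x`: some closed ball with `x` on its
boundary and outer normal `a` there lies in `T`. At a boundary point of a convex set, such a ball
leaves no other choice for the supporting hyperplane. -/
structure HasInnerBall (T : Set E) (x a : E) : Prop where
  norm_eq_one : ‖a‖ = 1
  exists_closedBall_subset : ∃ ρ > 0, closedBall (x - ρ • a) ρ ⊆ T

namespace HasInnerBall

lemma mem (h : HasInnerBall T x a) : x ∈ T := by
  obtain ⟨ρ, hρ, hT⟩ := h.exists_closedBall_subset
  refine hT ?_
  rw [mem_closedBall_iff_norm, sub_sub_cancel, norm_smul, h.norm_eq_one, mul_one,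
    Real.norm_of_nonneg hρ.le]

lemma mono (h : HasInnerBall S x a) (hST : S ⊆ T) : HasInnerBall T x a :=
  ⟨h.norm_eq_one, h.exists_closedBall_subset.imp fun _ hρ => ⟨hρ.1, hρ.2.trans hST⟩⟩

lemma inter_nhds (h : HasInnerBall T x a) {U : Set E} (hU : U ∈ 𝓝 x) :
    HasInnerBall (T ∩ U) x a := by
  obtain ⟨ρ, hρ, hT⟩ := h.exists_closedBall_subset
  obtain ⟨ε, hε, hεU⟩ := Metric.nhds_basis_closedBall.mem_iff.1 hU
  have hδ : 0 < min ρ (ε / 2) := by positivity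
  refine ⟨h.norm_eq_one, min ρ (ε / 2), hδ, subset_inter (.trans ?_ hT) (.trans ?_ hεU)⟩
  · refine closedBall_subset_closedBall' ?_
    rw [dist_eq_norm, sub_sub_sub_cancel_left, ← sub_smul, norm_smul, h.norm_eq_one, mul_one,
      Real.norm_of_nonneg (sub_nonneg.2 (min_le_left _ _)), add_sub_cancel]
  · refine closedBall_subset_closedBall' ?_
    rw [dist_eq_norm, sub_sub_cancel_left, norm_neg, norm_smul, h.norm_eq_one, mul_one,
      Real.norm_of_nonneg hδ.le]
    linarith [min_le_right ρ (ε / 2)]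

lemma preimage (L : E ≃ₗᵢ[ℝ] E) (h : HasInnerBall T (L x) (L a)) :
    HasInnerBall (L ⁻¹' T) x a := by
  obtain ⟨ρ, hρ, hT⟩ := h.exists_closedBall_subset
  refine ⟨(L.norm_map a).symm.trans h.norm_eq_one, ρ, hρ, fun p hp => hT ?_⟩
  rwa [← map_smul, ← map_sub, mem_closedBall, L.dist_map]

lemma nonempty_interior (h : HasInnerBall T x a) : (interior T).Nonempty := by
  obtain ⟨ρ, hρ, hT⟩ := h.exists_closedBall_subset
  exact ⟨_, interior_mono hT (ball_subset_interior_closedBall (mem_ball_self hρ))⟩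

/-- The test point is the farthest point of the inner ball in the direction `g`. -/
lemma eq_smul_of_isMaxOn {g : E} (h : HasInnerBall T x a) (hg : IsMaxOn (inner ℝ g) T x) :
    g = ‖g‖ • a := by
  obtain rfl | hg0 := eq_or_ne g 0
  · simp
  obtain ⟨ρ, hρ, hT⟩ := h.exists_closedBall_subset
  have hgn : 0 < ‖g‖ := norm_pos_iff.2 hg0
  have hmem : x - ρ • a + (ρ * ‖g‖⁻¹) • g ∈ T := hT <| by
    rw [mem_closedBall_iff_norm, add_sub_cancel_left, norm_smul,
      Real.norm_of_nonneg (by positivity), inv_mul_cancel_right₀ hgn.ne']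
  have hle : ρ * ‖g‖ ≤ ρ * ⟪g, a⟫ := by
    have := hg hmem
    simp only [mem_ofPred_eq, inner_add_right, inner_sub_right, real_inner_smul_right,
      real_inner_self_eq_norm_sq] at this
    have hcancel : ρ * ‖g‖⁻¹ * ‖g‖ ^ 2 = ρ * ‖g‖ := by field_simp
    linarith
  have hinner : ⟪g, a⟫ = ‖g‖ * ‖a‖ :=
    (real_inner_le_norm g a).antisymm <| by
      rw [h.norm_eq_one, mul_one]
      exact le_of_mul_le_mul_left hle hρ
  simpa [h.norm_eq_one] using inner_eq_norm_mul_iff_real.1 hinner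

end HasInnerBall

lemma tendsto_add_smul_nhdsGT_zero (x v : E) :
    Tendsto (fun t : ℝ => x + t • v) (𝓝[>] 0) (𝓝 x) :=
  .mono_left (Continuous.tendsto' (by fun_prop) _ _ (by simp)) nhdsWithin_le_nhds

lemma notMem_interior_union_of_isMaxOn (hab : ‖a‖ = ‖b‖) (hne : a ≠ -b)
    (hS : IsMaxOn (inner ℝ a) S x) (hT : IsMaxOn (inner ℝ b) T x) : x ∉ interior (S ∪ T) := by
  intro hx
  obtain ⟨t, hmem, ht⟩ := ((tendsto_add_smul_nhdsGT_zero x (a + b)).eventually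
    (mem_interior_iff_mem_nhds.1 hx)).and self_mem_nhdsWithin |>.exists
  have hpos : 0 < ‖a‖ ^ 2 + ⟪a, b⟫ := by
    have hsum : 0 < ‖a + b‖ := norm_pos_iff.2 fun h => hne (eq_neg_of_add_eq_zero_left h)
    have hsq := pow_pos hsum 2
    rw [norm_add_sq_real, ← hab] at hsq
    linarith
  have ht0 : 0 < t := ht
  rcases hmem with hmem | hmem
  · have hle := hS hmem
    simp only [mem_ofPred_eq, inner_add_right, real_inner_smul_right,
      real_inner_self_eq_norm_sq] at hle
    linarith [mul_pos ht0 hpos]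
  · have hle := hT hmem
    simp only [mem_ofPred_eq, inner_add_right, real_inner_smul_right,
      real_inner_self_eq_norm_sq, real_inner_comm a b, ← hab] at hle
    linarith [mul_pos ht0 hpos]

variable [CompleteSpace E]

lemma exists_isMaxOn_inner (hT : Convex ℝ T) (hne : (interior T).Nonempty)
    (hx : x ∉ interior T) : ∃ g ≠ 0, IsMaxOn (inner ℝ g) T x := by
  obtain ⟨f, hf, hmax⟩ := geometric_hahn_banach_of_nonempty_interior_point hT hx hne
  refine ⟨(InnerProductSpace.toDual ℝ E).symm f, by simpa using hf, fun p hp => ?_⟩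
  simpa using hmax p hp

namespace HasInnerBall

lemma isMaxOn (h : HasInnerBall T x a) (hT : Convex ℝ T) (hx : x ∉ interior T) :
    IsMaxOn (inner ℝ a) T x := by
  obtain ⟨g, hg0, hg⟩ := exists_isMaxOn_inner hT h.nonempty_interior hx
  intro p hp
  have hle := hg hp
  rw [h.eq_smul_of_isMaxOn hg] at hle
  simp only [mem_ofPred_eq, real_inner_smul_left] at hle
  exact le_of_mul_le_mul_left hle (norm_pos_iff.2 hg0)

lemma unique (ha : HasInnerBall T x a) (hb : HasInnerBall T x b) (hT : Convex ℝ T)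
    (hx : x ∉ interior T) : a = b := by
  simpa [ha.norm_eq_one] using hb.eq_smul_of_isMaxOn (ha.isMaxOn hT hx)

end HasInnerBall

end InnerBall

section Touching

variable {E : Type*} [NormedAddCommGroup E] [InnerProductSpace ℝ E] {C : Set E} {x a : E}

/-- `C` is touched at `x` from inside by a ball and from outside by a hyperplane, both with outer
unit normal `a`. These are the boundary points at which the normals of `C` are compared. -/
structure IsTouchedAt (C : Set E) (x a : E) : Prop extends HasInnerBall C x a where
  isMaxOn : IsMaxOn (inner ℝ a) C x

lemma IsTouchedAt.preimage (L : E ≃ₗᵢ[ℝ] E) (h : IsTouchedAt C (L x) (L a)) :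
    IsTouchedAt (L ⁻¹' C) x a where
  toHasInnerBall := h.toHasInnerBall.preimage L
  isMaxOn p hp := by simpa only [mem_ofPred_eq, L.inner_map_map] using h.isMaxOn hp

variable [FiniteDimensional ℝ E]

lemma exists_isTouchedAt_dist_eq_infDist_compl (hC : Convex ℝ C) (hcl : IsClosed C)
    (huniv : C ≠ univ) {q : E} (hq : q ∈ interior C) :
    ∃ y a, IsTouchedAt C y a ∧ dist q y = infDist q Cᶜ := by
  obtain ⟨y, hy, hdist⟩ := exists_mem_frontier_infDist_compl_eq_dist (interior_subset hq) huniv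
  have hqy : q ≠ y := fun h => hy.2 (h ▸ hq)
  have hpos : 0 < ‖y - q‖ := norm_pos_iff.2 (sub_ne_zero.2 hqy.symm)
  have hball : closedBall q ‖y - q‖ ⊆ C := by
    rw [← dist_eq_norm', ← hdist]
    exact (closedBall_infDist_compl_subset_closure (interior_subset hq)).trans_eq hcl.closure_eq
  have hinner : HasInnerBall C y (‖y - q‖⁻¹ • (y - q)) := by
    refine ⟨by simp [norm_smul, hpos.ne'], ‖y - q‖, hpos, ?_⟩
    rwa [smul_inv_smul₀ hpos.ne', sub_sub_cancel]
  exact ⟨y, _, ⟨hinner, hinner.isMaxOn hC hy.2⟩, hdist.symm⟩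

lemma frontier_subset_closure_isTouchedAt (hC : Convex ℝ C) (hcl : IsClosed C)
    (hne : (interior C).Nonempty) : frontier C ⊆ closure {x | ∃ a, IsTouchedAt C x a} := by
  intro x hx
  have hx_compl : x ∈ closure Cᶜ := (frontier_eq_closure_inter_closure.subset hx).2
  have huniv : C ≠ univ := by
    rintro rfl
    simp at hx
  have hx_int : x ∈ closure (interior C) := by
    rw [hC.closure_interior_eq_closure_of_nonempty_interior hne]
    exact frontier_subset_closure hx
  refine Metric.mem_closure_iff.2 fun ε hε => ?_
  obtain ⟨q, hq, hxq⟩ := Metric.mem_closure_iff.1 hx_int (ε / 2) (half_pos hε)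
  obtain ⟨y, a, hya, hqy⟩ := exists_isTouchedAt_dist_eq_infDist_compl hC hcl huniv hq
  have hle : dist q y ≤ dist q x := by
    rw [hqy, ← infDist_closure]
    exact infDist_le_dist_of_mem hx_compl
  exact ⟨y, ⟨a, hya⟩, by linarith [dist_triangle x q y, dist_comm q x]⟩

end Touching

section Polarization

variable {E : Type*} [NormedAddCommGroup E] [InnerProductSpace ℝ E] {C : Set E} {u x y a b : E}

/-- Two-point symmetrization of a subset of an inner product space: on the side `0 ≤ ⟪x, u⟫` of the
hyperplane `uᗮ` it is the union of `X` and its mirror image, on the other side the intersection.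
It plays the role of `twoPointSym` for cones, and `u` need not be a unit vector. -/
def polarization (u : E) (X : Set E) : Set E :=
  {x | (0 ≤ ⟪x, u⟫ ∧ (x ∈ X ∨ (ℝ ∙ u)ᗮ.reflection x ∈ X)) ∨
    (⟪x, u⟫ ≤ 0 ∧ (x ∈ X ∧ (ℝ ∙ u)ᗮ.reflection x ∈ X))}

lemma polarization_smul {t : ℝ} (ht : 0 < t) (u : E) (X : Set E) :
    polarization (t • u) X = polarization u X := by
  simp only [polarization, inner_smul_right_eq_smul, smul_nonneg_iff_nonneg_of_pos_left ht,
    smul_nonpos_iff_nonpos_of_pos_left ht, Submodule.span_singleton_smul_eq ht.ne'.isUnit]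

lemma smul_mem_polarization_iff {t : ℝ} (ht : 0 < t) (hC : ∀ p, t • p ∈ C ↔ p ∈ C) :
    t • x ∈ polarization u C ↔ x ∈ polarization u C := by
  simp only [polarization, mem_ofPred_eq, real_inner_smul_left, ← smul_eq_mul, map_smul, hC,
    smul_nonneg_iff_nonneg_of_pos_left ht, smul_nonpos_iff_nonpos_of_pos_left ht]

lemma mem_polarization_of_inner_pos (hx : 0 < ⟪x, u⟫) :
    x ∈ polarization u C ↔ x ∈ C ∪ (ℝ ∙ u)ᗮ.reflection ⁻¹' C := by
  simp [polarization, hx.le, hx.not_ge]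

lemma inner_sub_pos_of_norm_eq (hxy : ‖x‖ = ‖y‖) (hne : x ≠ y) : 0 < ⟪x, x - y⟫ := by
  have hpos : 0 < ‖x - y‖ ^ 2 := by
    have := sub_ne_zero.2 hne
    positivity
  rw [norm_sub_sq_real, ← hxy] at hpos
  rw [inner_sub_right, real_inner_self_eq_norm_sq]
  linarith

namespace IsTouchedAt

lemma preimage_reflection (hb : IsTouchedAt C y b) (hxy : ‖x‖ = ‖y‖) :
    IsTouchedAt ((ℝ ∙ (x - y))ᗮ.reflection ⁻¹' C) x ((ℝ ∙ (x - y))ᗮ.reflection b) := by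
  refine IsTouchedAt.preimage _ ?_
  rwa [Submodule.reflection_sub hxy, Submodule.reflection_reflection]

/-- Otherwise `a` would be parallel to the mirror and `b = -a`, so `C` would lie in a hyperplane,
which the inner ball prevents. -/
lemma ne_neg_reflection (ha : IsTouchedAt C x a) (hb : IsTouchedAt C y b) (hxy : ‖x‖ = ‖y‖) :
    a ≠ -(ℝ ∙ (x - y))ᗮ.reflection b := by
  intro hab
  have hswap : (ℝ ∙ (x - y))ᗮ.reflection x = y := Submodule.reflection_sub hxy
  have hswap' : (ℝ ∙ (x - y))ᗮ.reflection y = x := by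
    simpa using congrArg (ℝ ∙ (x - y))ᗮ.reflection hswap.symm
  have hσb : (ℝ ∙ (x - y))ᗮ.reflection b = -a := by rw [hab, neg_neg]
  have hbx : ⟪b, x⟫ = -⟪a, y⟫ := by
    rw [← LinearIsometryEquiv.inner_map_map (ℝ ∙ (x - y))ᗮ.reflection, hσb, hswap, inner_neg_left]
  have hby : ⟪b, y⟫ = -⟪a, x⟫ := by
    rw [← LinearIsometryEquiv.inner_map_map (ℝ ∙ (x - y))ᗮ.reflection, hσb, hswap',
      inner_neg_left]
  have hay : ⟪a, y⟫ = ⟪a, x⟫ := by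
    refine le_antisymm (ha.isMaxOn hb.mem) ?_
    have hle : ⟪b, x⟫ ≤ ⟪b, y⟫ := hb.isMaxOn ha.mem
    linarith
  have hσa : (ℝ ∙ (x - y))ᗮ.reflection a = a := by
    rw [Submodule.reflection_eq_self_iff, Submodule.mem_orthogonal_singleton_iff_inner_left,
      inner_sub_right, hay, sub_self]
  have hba : b = -a := by
    rw [← Submodule.reflection_reflection (ℝ ∙ (x - y))ᗮ b, hσb, map_neg, hσa]
  obtain ⟨ρ, hρ, hball⟩ := hb.exists_closedBall_subset
  have hle : ⟪a, y - ρ • b⟫ ≤ ⟪a, x⟫ := ha.isMaxOn (hball (mem_closedBall_self hρ.le))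
  rw [hba, smul_neg, sub_neg_eq_add, inner_add_right, real_inner_smul_right,
    real_inner_self_eq_norm_sq, ha.norm_eq_one, hay] at hle
  linarith

lemma notMem_interior_polarization (ha : IsTouchedAt C x a) (hb : IsTouchedAt C y b)
    (hxy : ‖x‖ = ‖y‖) (hne : x ≠ y) : x ∉ interior (polarization (x - y) C) := by
  have hU : {p : E | 0 < ⟪p, x - y⟫} ∈ 𝓝 x :=
    (isOpen_lt (by fun_prop) (by fun_prop)).mem_nhds (inner_sub_pos_of_norm_eq hxy hne)
  have hb' := hb.preimage_reflection hxy
  refine mt (fun hx => ?_) (notMem_interior_union_of_isMaxOn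
    (ha.norm_eq_one.trans hb'.norm_eq_one.symm)
    (ha.ne_neg_reflection hb hxy) ha.isMaxOn hb'.isMaxOn)
  rw [mem_interior_iff_mem_nhds] at hx ⊢
  filter_upwards [hx, hU] with p hp hpU
  exact (mem_polarization_of_inner_pos hpU).1 hp

variable [CompleteSpace E]

lemma reflection_eq (ha : IsTouchedAt C x a) (hb : IsTouchedAt C y b)
    (hT : Convex ℝ (polarization (x - y) C)) (hxy : ‖x‖ = ‖y‖) (hne : x ≠ y) :
    (ℝ ∙ (x - y))ᗮ.reflection b = a := by
  have hU : {p : E | 0 < ⟪p, x - y⟫} ∈ 𝓝 x :=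
    (isOpen_lt (by fun_prop) (by fun_prop)).mem_nhds (inner_sub_pos_of_norm_eq hxy hne)
  have hb' := (hb.preimage_reflection hxy).toHasInnerBall
  refine HasInnerBall.unique ((hb'.inter_nhds hU).mono ?_)
    ((ha.toHasInnerBall.inter_nhds hU).mono ?_) hT (ha.notMem_interior_polarization hb hxy hne)
  · exact fun p hp => (mem_polarization_of_inner_pos hp.2).2 (.inr hp.1)
  · exact fun p hp => (mem_polarization_of_inner_pos hp.2).2 (.inl hp.1)

lemma exists_sub_eq_smul (ha : IsTouchedAt C x a) (hb : IsTouchedAt C y b)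
    (hT : Convex ℝ (polarization (x - y) C)) (hxy : ‖x‖ = ‖y‖) (hne : x ≠ y) :
    ∃ μ : ℝ, a - b = μ • (x - y) := by
  refine ⟨-2 * (⟪x - y, b⟫ / ‖x - y‖ ^ 2), ?_⟩
  rw [← ha.reflection_eq hb hT hxy hne, Submodule.reflection_orthogonal_apply,
    Submodule.reflection_singleton_apply]
  simp only [RCLike.ofReal_real_eq_id, id_eq]
  module

end IsTouchedAt

end Polarization

section ParallelDifferences

variable {E : Type*} [NormedAddCommGroup E] [InnerProductSpace ℝ E]

/-- Three distinct points of a sphere are not collinear, so the three factors of proportionality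
of a triangle coincide. -/
lemma exists_eq_smul_add_of_cospherical {S : Set E} (hS : EuclideanGeometry.Cospherical S)
    {ν : E → E} (hν : ∀ x ∈ S, ∀ y ∈ S, ∃ μ : ℝ, ν x - ν y = μ • (x - y)) :
    ∃ (μ : ℝ) (c : E), ∀ x ∈ S, ν x = μ • x + c := by
  obtain hsub | ⟨x, hx, y, hy, hxy⟩ := S.subsingleton_or_nontrivial
  · obtain rfl | ⟨x, hx⟩ := S.eq_empty_or_nonempty
    · simp
    · exact ⟨0, ν x, fun p hp => by rw [hsub hp hx, zero_smul, zero_add]⟩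
  obtain ⟨μ, hμ⟩ := hν x hx y hy
  refine ⟨μ, ν x - μ • x, fun p hp => ?_⟩
  obtain rfl | hpx := eq_or_ne p x
  · abel
  obtain rfl | hpy := eq_or_ne p y
  · linear_combination (norm := module) -hμ
  obtain ⟨α, hα⟩ := hν p hp x hx
  obtain ⟨β, hβ⟩ := hν p hp y hy
  have hind : AffineIndependent ℝ ![p, x, y] :=
    hS.affineIndependent_of_mem_of_ne hp hx hy hpx hpy hxy
  have hweights : ∑ i, ![β - α, α - μ, μ - β] i • ![p, x, y] i = 0 := by
    simp only [Fin.sum_univ_three, Matrix.cons_val]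
    linear_combination (norm := module) hα + hμ - hβ
  have hαμ : α - μ = 0 :=
    hind.eq_zero_of_sum_eq_zero (by simp [Fin.sum_univ_three]) hweights 1 (Finset.mem_univ 1)
  rw [sub_eq_zero.1 hαμ] at hα
  linear_combination (norm := module) hα

lemma exists_inner_eq_of_parallel_sub [Nontrivial E] {S : Set E} {ν : E → E}
    (hS : ∀ x ∈ S, ‖x‖ = 1) (hν_norm : ∀ x ∈ S, ‖ν x‖ = 1) (hν_orth : ∀ x ∈ S, ⟪ν x, x⟫ = 0)
    (hν : ∀ x ∈ S, ∀ y ∈ S, ∃ μ : ℝ, ν x - ν y = μ • (x - y)) :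
    ∃ (z : E) (k : ℝ), ‖z‖ = 1 ∧ |k| < 1 ∧ ∀ x ∈ S, ⟪x, z⟫ = k := by
  obtain rfl | ⟨p, hp⟩ := S.eq_empty_or_nonempty
  · obtain ⟨z, hz⟩ := exists_norm_eq E zero_le_one
    exact ⟨z, 0, hz, by simp, by simp⟩
  have hcosph : EuclideanGeometry.Cospherical S := ⟨0, 1, by simpa using hS⟩
  obtain ⟨μ, c, hc⟩ := exists_eq_smul_add_of_cospherical hcosph hν
  have hc' : ∀ x ∈ S, c = ν x - μ • x := fun x hx => by rw [hc x hx, add_sub_cancel_left]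
  have hc_sq : ‖c‖ ^ 2 = 1 + μ ^ 2 := by
    rw [hc' p hp, norm_sub_sq_real, norm_smul, real_inner_smul_right, hν_orth p hp, hν_norm p hp,
      hS p hp, Real.norm_eq_abs, mul_one, sq_abs]
    ring
  have hμc : |μ| < ‖c‖ := abs_lt_of_sq_lt_sq (by linarith) (norm_nonneg c)
  have hc_pos : 0 < ‖c‖ := (abs_nonneg μ).trans_lt hμc
  refine ⟨‖c‖⁻¹ • c, ‖c‖⁻¹ * -μ, by simp [norm_smul, hc_pos.ne'], ?_, fun x hx => ?_⟩
  · rwa [abs_mul, abs_neg, abs_inv, abs_norm, inv_mul_lt_one₀ hc_pos]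
  · have hxc : ⟪x, c⟫ = -μ := by
      rw [hc' x hx, inner_sub_right, real_inner_smul_right, real_inner_self_eq_norm_sq,
        real_inner_comm, hν_orth x hx, hS x hx]
      ring
    rw [real_inner_smul_right, hxc]

end ParallelDifferences

section CircularCone

lemma subset_of_isPreconnected_of_disjoint_frontier {X : Type*} [TopologicalSpace X] {s t : Set X}
    (hs : IsPreconnected s) (hst : Disjoint s (frontier t)) (hne : (s ∩ t).Nonempty) : s ⊆ t := by
  have hcover : s ⊆ interior t ∪ interior tᶜ := by
    rw [← compl_frontier_eq_union_interior]
    exact hst.subset_compl_right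
  have hdisj : Disjoint (interior t) (interior tᶜ) :=
    disjoint_compl_right.mono interior_subset interior_subset
  refine .trans ?_ interior_subset
  refine (hs.subset_or_subset isOpen_interior isOpen_interior hdisj
    hcover).resolve_right fun h => ?_
  obtain ⟨x, hxs, hxt⟩ := hne
  exact interior_subset (h hxs) hxt

variable {E : Type*} [NormedAddCommGroup E] [InnerProductSpace ℝ E] {C : Set E} {z : E} {k : ℝ}

/-- The circular cone of points `x` making an angle at most `arccos k` with the unit vector `z` is
the superlevel set `0 ≤ circularDefect z k x`, and its boundary is the zero set. -/
def circularDefect (z : E) (k : ℝ) (x : E) : ℝ := ⟪x, z⟫ - k * ‖x‖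

@[fun_prop]
lemma continuous_circularDefect (z : E) (k : ℝ) : Continuous (circularDefect z k) := by
  unfold circularDefect
  fun_prop

lemma circularDefect_smul (z : E) (k : ℝ) {t : ℝ} (ht : 0 ≤ t) (x : E) :
    circularDefect z k (t • x) = t * circularDefect z k x := by
  rw [circularDefect, circularDefect, real_inner_smul_left, norm_smul, Real.norm_of_nonneg ht]
  ring

lemma concaveOn_circularDefect (z : E) (hk : 0 ≤ k) : ConcaveOn ℝ univ (circularDefect z k) := by
  refine ConcaveOn.sub ?_ (convexOn_univ_norm.smul hk)
  have := (innerSL ℝ z).toLinearMap.concaveOn convex_univ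
  simpa [real_inner_comm] using this

lemma circularDefect_add_smul_ge (hz : ‖z‖ = 1) (hk : 0 ≤ k) (x : E) {s : ℝ} (hs : 0 ≤ s) :
    circularDefect z k x + s * (1 - k) ≤ circularDefect z k (x + s • z) := by
  have hnorm : ‖x + s • z‖ ≤ ‖x‖ + s := by
    simpa [norm_smul, hz, abs_of_nonneg hs] using norm_add_le x (s • z)
  have hinner : ⟪x + s • z, z⟫ = ⟪x, z⟫ + s := by
    rw [inner_add_left, real_inner_smul_left, real_inner_self_eq_norm_sq, hz, one_pow, mul_one]
  unfold circularDefect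
  nlinarith

lemma isPreconnected_circularDefect_pos (z : E) (hk : 0 ≤ k) :
    IsPreconnected {x | 0 < circularDefect z k x} := by
  simpa using ((concaveOn_circularDefect z hk).convex_gt 0).isPreconnected

lemma isPreconnected_circularDefect_neg (hz : ‖z‖ = 1) (hk₀ : 0 ≤ k) (hk₁ : k < 1) :
    IsPreconnected {x | circularDefect z k x < 0} := by
  have hstar : StarConvex ℝ (-z) {x | circularDefect z k x < 0} := by
    intro x hx s t hs ht hst
    have hle := circularDefect_add_smul_ge hz hk₀ (s • -z + t • x) hs
    rw [show s • -z + t • x + s • z = t • x by module, circularDefect_smul z k ht] at hle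
    have hx' : circularDefect z k x < 0 := hx
    change circularDefect z k (s • -z + t • x) < 0
    obtain rfl | hs' := hs.eq_or_lt
    · nlinarith
    · nlinarith [mul_pos hs' (sub_pos.2 hk₁)]
  have hneg : circularDefect z k (-z) < 0 := by
    rw [circularDefect, inner_neg_left, real_inner_self_eq_norm_sq, norm_neg, hz]
    linarith
  exact (hstar.isPathConnected hneg).isConnected.isPreconnected

lemma setOf_circularDefect_nonneg_subset_closure (hz : ‖z‖ = 1) (hk₀ : 0 ≤ k) (hk₁ : k < 1) :
    {x | 0 ≤ circularDefect z k x} ⊆ closure {x | 0 < circularDefect z k x} := by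
  intro x hx
  refine mem_closure_of_tendsto (tendsto_add_smul_nhdsGT_zero x z) ?_
  filter_upwards [self_mem_nhdsWithin] with t (ht : 0 < t)
  have hle := circularDefect_add_smul_ge hz hk₀ x ht.le
  have hx' : 0 ≤ circularDefect z k x := hx
  exact (by nlinarith : 0 < circularDefect z k (x + t • z))

lemma setOf_circularDefect_nonpos_subset_closure (hz : ‖z‖ = 1) (hk₀ : 0 ≤ k) (hk₁ : k < 1) :
    {x | circularDefect z k x ≤ 0} ⊆ closure {x | circularDefect z k x < 0} := by
  intro x hx
  refine mem_closure_of_tendsto (tendsto_add_smul_nhdsGT_zero x (-z)) ?_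
  filter_upwards [self_mem_nhdsWithin] with t (ht : 0 < t)
  have hle := circularDefect_add_smul_ge hz hk₀ (x + t • -z) ht.le
  rw [show x + t • -z + t • z = x by module] at hle
  have hx' : circularDefect z k x ≤ 0 := hx
  exact (by nlinarith : circularDefect z k (x + t • -z) < 0)

theorem eq_setOf_circularDefect_nonneg (hz : ‖z‖ = 1) (hk₀ : 0 ≤ k) (hk₁ : k < 1)
    (hcl : IsClosed C) (hne : (interior C).Nonempty)
    (hfr : ∀ x ∈ frontier C, circularDefect z k x = 0)
    (hC : ¬ {x | circularDefect z k x ≤ 0} ⊆ C) : C = {x | 0 ≤ circularDefect z k x} := by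
  have hle : C ⊆ {x | 0 ≤ circularDefect z k x} := by
    intro p hp
    by_contra hp_nonneg
    have hpneg : circularDefect z k p < 0 := not_le.1 hp_nonneg
    refine hC ((setOf_circularDefect_nonpos_subset_closure hz hk₀ hk₁).trans
      (closure_minimal ?_ hcl))
    refine subset_of_isPreconnected_of_disjoint_frontier
      (isPreconnected_circularDefect_neg hz hk₀ hk₁) ?_ ⟨p, hpneg, hp⟩
    exact disjoint_left.2 fun x hx hxfr => hx.ne (hfr x hxfr)
  refine hle.antisymm ((setOf_circularDefect_nonneg_subset_closure hz hk₀ hk₁).trans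
    (closure_minimal ?_ hcl))
  obtain ⟨p, hp⟩ := hne
  obtain ⟨t, htC, ht⟩ := ((tendsto_add_smul_nhdsGT_zero p z).eventually
    (mem_interior_iff_mem_nhds.1 hp)).and self_mem_nhdsWithin |>.exists
  have hpos : 0 < circularDefect z k (p + t • z) := by
    have hp₀ : 0 ≤ circularDefect z k p := hle (interior_subset hp)
    have ht₀ : 0 < t := ht
    nlinarith [circularDefect_add_smul_ge hz hk₀ p ht₀.le]
  refine subset_of_isPreconnected_of_disjoint_frontier
    (isPreconnected_circularDefect_pos z hk₀) ?_ ⟨_, hpos, htC⟩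
  exact disjoint_left.2 fun x hx hxfr => hx.ne' (hfr x hxfr)

end CircularCone

section Cone

variable {E : Type*} [NormedAddCommGroup E] [InnerProductSpace ℝ E] {C : ConvexCone ℝ E} {x a : E}

lemma exists_ne_zero_inner_eq_zero (hE : 1 < Module.finrank ℝ E) (z : E) :
    ∃ v ≠ 0, ⟪v, z⟫ = 0 := by
  have hne : (ℝ ∙ z)ᗮ ≠ ⊥ := fun hbot => hE.not_ge <| finrank_le_one z fun w => by
    rw [← Submodule.mem_span_singleton, Submodule.orthogonal_eq_bot_iff.1 hbot]
    trivial
  obtain ⟨v, hv, hv0⟩ := Submodule.exists_mem_ne_zero_of_ne_bot hne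
  exact ⟨v, hv0, (Submodule.mem_orthogonal_singleton_iff_inner_left).1 hv⟩

namespace IsTouchedAt

lemma inner_eq_zero (h : IsTouchedAt (C : Set E) x a) : ⟪a, x⟫ = 0 := by
  have hhalf : ⟪a, (1 / 2 : ℝ) • x⟫ ≤ ⟪a, x⟫ := h.isMaxOn (C.smul_mem (by norm_num) h.mem)
  have hdouble : ⟪a, (2 : ℝ) • x⟫ ≤ ⟪a, x⟫ := h.isMaxOn (C.smul_mem (by norm_num) h.mem)
  rw [real_inner_smul_right] at hhalf hdouble
  linarith

lemma smul (h : IsTouchedAt (C : Set E) x a) {t : ℝ} (ht : 0 < t) :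
    IsTouchedAt (C : Set E) (t • x) a := by
  obtain ⟨ρ, hρ, hball⟩ := h.exists_closedBall_subset
  have hscale := smul_closedBall t (x - ρ • a) hρ.le
  rw [Real.norm_of_nonneg ht.le, smul_sub, smul_smul] at hscale
  refine ⟨⟨h.norm_eq_one, t * ρ, mul_pos ht hρ, ?_⟩, fun p hp => ?_⟩
  · rw [← hscale]
    rintro _ ⟨p, hp, rfl⟩
    exact C.smul_mem ht (hball hp)
  · change ⟪a, p⟫ ≤ ⟪a, t • x⟫
    rw [real_inner_smul_right, h.inner_eq_zero, mul_zero, ← h.inner_eq_zero]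
    exact h.isMaxOn hp

end IsTouchedAt

lemma exists_inner_eq_of_isTouchedAt [CompleteSpace E] [Nontrivial E]
    (hpol : ∀ u : E, ‖u‖ = 1 → Convex ℝ (polarization u C)) :
    ∃ (z : E) (k : ℝ), ‖z‖ = 1 ∧ |k| < 1 ∧
      ∀ x a, ‖x‖ = 1 → IsTouchedAt (C : Set E) x a → ⟪x, z⟫ = k := by
  choose! ν hν using
    show ∀ x ∈ {x : E | ‖x‖ = 1 ∧ ∃ a, IsTouchedAt (C : Set E) x a}, ∃ a, IsTouchedAt C x a from
      fun x hx => hx.2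
  obtain ⟨z, k, hz, hk, hzk⟩ := exists_inner_eq_of_parallel_sub (fun x hx => hx.1)
    (fun x hx => (hν x hx).norm_eq_one) (fun x hx => (hν x hx).inner_eq_zero) fun x hx y hy => by
      obtain rfl | hxy := eq_or_ne x y
      · exact ⟨0, by simp⟩
      have hpos : 0 < ‖x - y‖⁻¹ := inv_pos.2 (norm_pos_iff.2 (sub_ne_zero.2 hxy))
      have hT := hpol (‖x - y‖⁻¹ • (x - y)) (norm_smul_inv_norm (𝕜 := ℝ) (sub_ne_zero.2 hxy))
      rw [polarization_smul hpos] at hT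
      exact (hν x hx).exists_sub_eq_smul (hν y hy) hT (hx.1.trans hy.1.symm) hxy
  exact ⟨z, k, hz, hk, fun x a hx ha => hzk x ⟨hx, a, ha⟩⟩

variable [FiniteDimensional ℝ E]

lemma exists_forall_mem_frontier_circularDefect_eq_zero [Nontrivial E] (hcl : IsClosed (C : Set E))
    (hne : (interior (C : Set E)).Nonempty)
    (hpol : ∀ u : E, ‖u‖ = 1 → Convex ℝ (polarization u C)) :
    ∃ (z : E) (k : ℝ), ‖z‖ = 1 ∧ 0 ≤ k ∧ k < 1 ∧
      ∀ x ∈ frontier (C : Set E), circularDefect z k x = 0 := by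
  obtain ⟨z, k, hz, hk, hzk⟩ := exists_inner_eq_of_isTouchedAt hpol
  have hfr : ∀ x ∈ frontier (C : Set E), circularDefect z k x = 0 := by
    refine fun x hx => closure_minimal ?_ (isClosed_eq (by fun_prop) continuous_const)
      (frontier_subset_closure_isTouchedAt C.convex hcl hne hx)
    rintro y ⟨a, ha⟩
    obtain rfl | hy := eq_or_ne y 0
    · simp [circularDefect]
    have hpos : 0 < ‖y‖⁻¹ := inv_pos.2 (norm_pos_iff.2 hy)
    have hyz := hzk _ a (norm_smul_inv_norm (𝕜 := ℝ) hy) (ha.smul hpos)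
    rw [RCLike.ofReal_real_eq_id, id, real_inner_smul_left,
      inv_mul_eq_iff_eq_mul₀ (norm_ne_zero_iff.2 hy)] at hyz
    exact sub_eq_zero.2 (hyz.trans (mul_comm _ _))
  obtain hk₀ | hk₀ := le_total 0 k
  · exact ⟨z, k, hz, hk₀, (abs_lt.1 hk).2, hfr⟩
  · refine ⟨-z, -k, by rwa [norm_neg], neg_nonneg.2 hk₀, neg_lt.1 (abs_lt.1 hk).1, fun x hx => ?_⟩
    have := hfr x hx
    rw [circularDefect] at this ⊢
    rw [inner_neg_right]
    linarith

theorem exists_eq_setOf_circularDefect_nonneg_of_convex_polarization (hE : 1 < Module.finrank ℝ E)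
    (hcl : IsClosed (C : Set E)) (hsal : C.Salient) (hne : (interior (C : Set E)).Nonempty)
    (hpol : ∀ u : E, ‖u‖ = 1 → Convex ℝ (polarization u C)) :
    ∃ (z : E) (k : ℝ), ‖z‖ = 1 ∧ 0 < k ∧ k < 1 ∧ (C : Set E) = {x | 0 ≤ circularDefect z k x} := by
  have : Nontrivial E := Module.nontrivial_of_finrank_pos (R := ℝ) (by omega)
  obtain ⟨z, k, hz, hk₀, hk₁, hfr⟩ := exists_forall_mem_frontier_circularDefect_eq_zero hcl hne hpol
  obtain ⟨v, hv, hvz⟩ := exists_ne_zero_inner_eq_zero hE z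
  have hdefect : circularDefect z k v = -(k * ‖v‖) := by rw [circularDefect, hvz, zero_sub]
  have hdefect_neg : circularDefect z k (-v) = -(k * ‖v‖) := by
    rw [circularDefect, inner_neg_left, hvz, norm_neg, neg_zero, zero_sub]
  have hnonpos : -(k * ‖v‖) ≤ 0 := neg_nonpos.2 (by positivity)
  have hC := eq_setOf_circularDefect_nonneg hz hk₀ hk₁ hcl hne hfr fun hsub =>
    hsal v (hsub (hdefect.trans_le hnonpos)) hv (hsub (hdefect_neg.trans_le hnonpos))
  refine ⟨z, k, hz, hk₀.lt_of_ne ?_, hk₁, hC⟩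
  rintro rfl
  have hmem : ∀ p, circularDefect z 0 p = -(0 * ‖v‖) → p ∈ C := fun p hp => by
    rw [← SetLike.mem_coe, hC, mem_ofPred_eq, hp, zero_mul, neg_zero]
  exact hsal v (hmem v hdefect) hv (hmem (-v) hdefect_neg)

end Cone

section ConeOver

variable {E : Type*} [NormedAddCommGroup E] [InnerProductSpace ℝ E] {K : Set (sphere (0 : E) 1)}
  {p w : E}

/-- The cone `{t • x : t ≥ 0, x ∈ K}` over a subset `K` of the unit sphere; it is empty when `K`
is. This is the set whose convexity `SphConvex` asks for. -/
def coneOver (K : Set (sphere (0 : E) 1)) : Set E :=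
  {p | ∃ t : ℝ, 0 ≤ t ∧ ∃ x ∈ K, p = t • (x : E)}

lemma mem_coneOver_iff_norm : p ∈ coneOver K ↔ ∃ x ∈ K, p = ‖p‖ • (x : E) := by
  refine ⟨?_, fun h => ⟨‖p‖, norm_nonneg p, h⟩⟩
  rintro ⟨t, ht, x, hx, rfl⟩
  exact ⟨x, hx, by rw [norm_smul, norm_eq_of_mem_sphere, mul_one, Real.norm_of_nonneg ht]⟩

lemma mem_coneOver_iff_of_norm_eq_one (hp : ‖p‖ = 1) : p ∈ coneOver K ↔ p ∈ ((↑) '' K : Set E) := by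
  simp only [mem_coneOver_iff_norm, hp, one_smul, mem_image, eq_comm]

lemma coe_mem_coneOver {x : sphere (0 : E) 1} : (x : E) ∈ coneOver K ↔ x ∈ K := by
  rw [mem_coneOver_iff_of_norm_eq_one (norm_eq_of_mem_sphere x),
    Subtype.val_injective.mem_set_image]

lemma zero_mem_coneOver : 0 ∈ coneOver K ↔ K.Nonempty := by
  simp [mem_coneOver_iff_norm, Set.Nonempty]

lemma smul_mem_coneOver_iff {t : ℝ} (ht : 0 < t) : t • p ∈ coneOver K ↔ p ∈ coneOver K := by
  simp only [mem_coneOver_iff_norm, norm_smul, Real.norm_of_nonneg ht.le, mul_smul,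
    smul_right_inj ht.ne']

/-- `coneOver K` bundled as a `ConvexCone`, to use the theory of convex cones on it. -/
def coneOver.toConvexCone (hK : Convex ℝ (coneOver K)) : ConvexCone ℝ E where
  carrier := coneOver K
  smul_mem' _ ht _ hp := (smul_mem_coneOver_iff ht).2 hp
  add_mem' p hp q hq := by
    rw [← smul_mem_coneOver_iff (one_half_pos (α := ℝ)), smul_add]
    exact hK hp hq one_half_pos.le one_half_pos.le (add_halves 1)

lemma coneOver.coe_toConvexCone (hK : Convex ℝ (coneOver K)) :
    (coneOver.toConvexCone hK : Set E) = coneOver K := rfl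

lemma coneOver.salient_toConvexCone (hK : Convex ℝ (coneOver K)) (hw : ∀ x ∈ K, 0 < ⟪(x : E), w⟫) :
    (coneOver.toConvexCone hK).Salient := by
  have hpos : ∀ p ∈ coneOver K, p ≠ 0 → 0 < ⟪p, w⟫ := fun p hp hp₀ => by
    obtain ⟨x, hx, hpx⟩ := mem_coneOver_iff_norm.1 hp
    rw [hpx, real_inner_smul_left]
    exact mul_pos (norm_pos_iff.2 hp₀) (hw x hx)
  intro p hp hp₀ hneg
  have hlt := hpos (-p) hneg (neg_ne_zero.2 hp₀)
  rw [inner_neg_left] at hlt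
  linarith [hpos p hp hp₀]

lemma isClosed_coneOver (hK : IsCompact K) : IsClosed (coneOver K) := by
  have : CompactSpace K := isCompact_iff_compactSpace.1 hK
  have hclosed : IsClosed {q : E × K | q.1 = ‖q.1‖ • ((q.2 : sphere (0 : E) 1) : E)} :=
    isClosed_eq (by fun_prop) (by fun_prop)
  convert isClosedMap_fst_of_compactSpace _ hclosed
  ext p
  simp [mem_coneOver_iff_norm]

lemma nonempty_interior_coneOver (hK : (interior K).Nonempty) :
    (interior (coneOver K)).Nonempty := by
  have hopen : IsOpen (Ioi (0 : ℝ) • ((↑) '' interior K : Set E)) :=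
    isOpen_Ioi.smul_sphere one_ne_zero self_notMem_Ioi isOpen_interior
  obtain ⟨x, hx⟩ := hK
  refine ⟨(1 : ℝ) • (x : E), interior_maximal ?_ hopen
    (smul_mem_smul (mem_Ioi.2 one_pos) (mem_image_of_mem _ hx))⟩
  rintro _ ⟨t, ht, _, ⟨y, hy, rfl⟩, rfl⟩
  exact ⟨t, le_of_lt ht, y, interior_subset hy, rfl⟩

end ConeOver

section TwoPointSym

variable {n : ℕ} {u : Esp n} {K : Set (Sph n)}

lemma SphConvex.convex_coneOver (hK : SphConvex K) : Convex ℝ (coneOver K) := hK.2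

lemma reflMap_eq_reflection (hu : ‖u‖ = 1) (p : Esp n) : reflMap u p = (ℝ ∙ u)ᗮ.reflection p := by
  rw [Submodule.reflection_orthogonal_apply, Submodule.reflection_singleton_apply, hu, reflMap,
    real_inner_comm]
  simp only [RCLike.ofReal_real_eq_id, id_eq]
  module

lemma coe_mem_polarization_coneOver (hu : ‖u‖ = 1) {x : Sph n} :
    (x : Esp n) ∈ polarization u (coneOver K) ↔ x ∈ twoPointSym u K := by
  have hx : ‖(ℝ ∙ u)ᗮ.reflection (x : Esp n)‖ = 1 := by
    rw [LinearIsometryEquiv.norm_map, norm_eq_of_mem_sphere]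
  simp only [polarization, twoPointSym, mem_ofPred_eq, coe_mem_coneOver, reflMap_eq_reflection hu,
    mem_coneOver_iff_of_norm_eq_one hx]

lemma twoPointSym_nonempty (hu : ‖u‖ = 1) (hK : K.Nonempty) : (twoPointSym u K).Nonempty := by
  obtain ⟨x, hx⟩ := hK
  obtain hxu | hxu := le_total 0 ⟪(x : Esp n), u⟫
  · exact ⟨x, .inl ⟨hxu, .inl hx⟩⟩
  · have hσ : (ℝ ∙ u)ᗮ.reflection (x : Esp n) ∈ sphere 0 1 := by simp
    have hinner : ⟪(ℝ ∙ u)ᗮ.reflection (x : Esp n), u⟫ = -⟪(x : Esp n), u⟫ := by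
      rw [← LinearIsometryEquiv.inner_map_map (ℝ ∙ u)ᗮ.reflection,
        Submodule.reflection_reflection, Submodule.reflection_orthogonalComplement_singleton_eq_neg,
        inner_neg_right]
    refine ⟨⟨_, hσ⟩, (coe_mem_polarization_coneOver hu).1 (.inl ⟨?_, .inr ?_⟩)⟩
    · rw [hinner]
      exact neg_nonneg.2 hxu
    · rwa [Submodule.reflection_reflection, coe_mem_coneOver]

lemma coneOver_twoPointSym (hu : ‖u‖ = 1) (hK : K.Nonempty) :
    coneOver (twoPointSym u K) = polarization u (coneOver K) := by
  ext p
  obtain rfl | hp := eq_or_ne p 0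
  · simp [polarization, zero_mem_coneOver, hK, twoPointSym_nonempty hu hK]
  have hpos : 0 < ‖p‖⁻¹ := inv_pos.2 (norm_pos_iff.2 hp)
  obtain ⟨x, hx⟩ : ∃ x : Sph n, (x : Esp n) = ‖p‖⁻¹ • p :=
    ⟨⟨‖p‖⁻¹ • p, by simp [norm_smul, hp]⟩, rfl⟩
  rw [← smul_mem_coneOver_iff hpos,
    ← smul_mem_polarization_iff hpos fun _ => smul_mem_coneOver_iff hpos, ← hx, coe_mem_coneOver,
    coe_mem_polarization_coneOver hu]

lemma mem_sphBall_arccos {k : ℝ} (hk₀ : -1 ≤ k) (hk₁ : k ≤ 1) {x z : Sph n} :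
    x ∈ sphBall z (Real.arccos k) ↔ k ≤ ⟪(x : Esp n), z⟫ := by
  have hinner : ⟪(x : Esp n), z⟫ ∈ Icc (-1) 1 := by
    rw [mem_Icc, ← abs_le]
    simpa using abs_real_inner_le_norm (x : Esp n) z
  exact Real.strictAntiOn_arccos.le_iff_ge hinner ⟨hk₀, hk₁⟩

end TwoPointSym

end SphConvexTwoPointSym

/-- a compact spherically convex body all of whose two-point
symmetrizations are spherically convex is a closed geodesic ball. -/
theorem sphConvex_twoPointSym_is_ball (n : ℕ) (hn : 2 ≤ n) (K : Set (Sph n))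
    (hKconv : SphConvex K) (hKcomp : IsCompact K) (hKint : (interior K).Nonempty)
    (hsym : ∀ u : Esp n, ‖u‖ = 1 → SphConvex (twoPointSym u K)) :
    ∃ z : Sph n, ∃ r : ℝ, 0 < r ∧ r < Real.pi / 2 ∧ K = sphBall z r := by
  have hconv := hKconv.convex_coneOver
  obtain ⟨w, -, hw⟩ := hKconv.1
  obtain ⟨z, k, hz, hk₀, hk₁, hC⟩ :=
    exists_eq_setOf_circularDefect_nonneg_of_convex_polarization
      (C := coneOver.toConvexCone hconv) (by rw [finrank_euclideanSpace_fin]; omega)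
      (isClosed_coneOver hKcomp) (coneOver.salient_toConvexCone hconv hw)
      (nonempty_interior_coneOver hKint) fun u hu => by
        rw [coneOver.coe_toConvexCone, ← coneOver_twoPointSym hu (hKint.mono interior_subset)]
        exact (hsym u hu).convex_coneOver
  refine ⟨⟨z, mem_sphere_zero_iff_norm.2 hz⟩, Real.arccos k, Real.arccos_pos.2 hk₁,
    Real.arccos_lt_pi_div_two.2 hk₀, ?_⟩
  ext x
  rw [mem_sphBall_arccos (by linarith) hk₁.le, ← coe_mem_coneOver,
    ← coneOver.coe_toConvexCone hconv, hC]
  simp [circularDefect]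
end
end

section
/- Let n ≥ 2, let π/2 < D < π, and let C ⊆ S^n be a D-maximal set. Then there exists a solid D-maximal set C₀ with C₀ ⊆ C. -/
/-!
The solid subset is the closure of the interior of `C`, and the point is that `C ∖ interior C` is
null. If every point of `C` is at distance less than `D` from `x`, a small ball about `x` can be
added to `C` without violating the diameter bound; by maximality the ball adds no volume, so `C`,
being closed, contains a neighbourhood of `x`. Hence a point `x ∈ C ∖ interior C` has a partner
`y ∈ C` with `d(x, y) = D`, and `C` lies in the closed geodesic ball `B(y, D)`. As `0 < D < π`, the
geodesic from `y` to `x` can be prolonged beyond `x`, which exhibits holes of `B(y, D)` at every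
small scale near `x`: the set `C` is porous at `x`. By Lebesgue's density theorem, for balls that
need not be centred at the point, a set is porous at almost none of its points.

The density theorem requires a doubling measure. Stereographic projection compares the spherical
volume of a small ball about one point with Lebesgue measure on a hyperplane, and the transitivity
of the isometry group makes the comparison uniform in the centre.
-/

open MeasureTheory

noncomputable section

/-- A set `C ⊆ S^n` is `D`-maximal: compact, of geodesic diameter at most `D`, and of
maximal spherical volume among compact sets of diameter at most `D`. -/
def DMaximal (n : ℕ) (D : ℝ) (C : Set (Sph n)) : Prop :=
  IsCompact C ∧ sphDiam C ≤ D ∧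
    sphVol n C =
      sSup {v | ∃ X : Set (Sph n), IsCompact X ∧ sphDiam X ≤ D ∧ v = sphVol n X}

/-- A nonempty compact set `C ⊆ S^n`, `C ≠ S^n`, is solid if it equals the closure
of its interior (in the topology of `S^n`). -/
def Solid {n : ℕ} (C : Set (Sph n)) : Prop :=
  C.Nonempty ∧ IsCompact C ∧ C ≠ Set.univ ∧ C = closure (interior C)

/-- `x` is a strongly regular boundary point of `C`: `x ∈ ∂C` and there are `r > 0`
and `z ∈ C` with `B(z,r) ⊆ C` and `d(x,z) = r`. -/
def StronglyRegular {n : ℕ} (C : Set (Sph n)) (x : Sph n) : Prop :=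
  x ∈ frontier C ∧ ∃ r > 0, ∃ z ∈ C, sphBall z r ⊆ C ∧ gd x z = r

open Filter Topology Metric Module InnerProductGeometry
open scoped NNReal ENNReal RealInnerProductSpace

lemma tendsto_const_mul_nhdsGT_zero {𝕜 : Type*} [Field 𝕜] [LinearOrder 𝕜]
    [IsStrictOrderedRing 𝕜] [TopologicalSpace 𝕜] [OrderTopology 𝕜] {a : 𝕜} (ha : 0 < a) :
    Tendsto (fun r => a * r) (𝓝[>] 0) (𝓝[>] 0) :=
  tendsto_iff_comap.2 (comap_mulLeft_nhdsGT_zero ha).ge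

section AhlforsRegular

/-- Ahlfors `d`-regularity of `μ` at small scales: the measure of a ball of radius `r` is
comparable to `r ^ d`, uniformly in the centre. A single constant serves both bounds, so that
no positivity condition on it is needed. -/
def IsAhlforsRegular {X : Type*} [PseudoMetricSpace X] [MeasurableSpace X] (μ : Measure X)
    (d : ℝ) : Prop :=
  ∃ c : ℝ≥0, ∀ᶠ r in 𝓝[>] (0 : ℝ), ∀ x,
    μ (closedBall x r) ≤ c * ENNReal.ofReal (r ^ d) ∧
      ENNReal.ofReal (r ^ d) ≤ c * μ (closedBall x r)

namespace IsAhlforsRegular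

variable {X : Type*} [PseudoMetricSpace X] [MeasurableSpace X] {μ : Measure X} {d : ℝ}

lemma isUnifLocDoublingMeasure (h : IsAhlforsRegular μ d) : IsUnifLocDoublingMeasure μ := by
  obtain ⟨c, hc⟩ := h
  refine ⟨⟨c * Real.toNNReal (2 ^ d) * c, ?_⟩⟩
  filter_upwards [hc, (tendsto_const_mul_nhdsGT_zero two_pos).eventually hc,
    self_mem_nhdsWithin] with r hr h2r (hr0 : 0 < r) x
  calc μ (closedBall x (2 * r)) ≤ c * ENNReal.ofReal ((2 * r) ^ d) := (h2r x).1
    _ = c * ENNReal.ofReal (2 ^ d) * ENNReal.ofReal (r ^ d) := by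
      rw [Real.mul_rpow zero_le_two hr0.le, ENNReal.ofReal_mul (by positivity), mul_assoc]
    _ ≤ c * ENNReal.ofReal (2 ^ d) * (c * μ (closedBall x r)) := by gcongr; exact (hr x).2
    _ = ↑(c * Real.toNNReal (2 ^ d) * c) * μ (closedBall x r) := by
      rw [ENNReal.coe_mul, ENNReal.coe_mul, ENNReal.ofReal, mul_assoc, mul_assoc, mul_assoc]

lemma isLocallyFiniteMeasure (h : IsAhlforsRegular μ d) : IsLocallyFiniteMeasure μ := by
  obtain ⟨c, hc⟩ := h
  obtain ⟨r, hr, hr0⟩ := (hc.and self_mem_nhdsWithin).exists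
  exact ⟨fun x => ⟨closedBall x r, closedBall_mem_nhds x hr0,
    (hr x).1.trans_lt (ENNReal.mul_lt_top ENNReal.coe_lt_top ENNReal.ofReal_lt_top)⟩⟩

lemma isOpenPosMeasure (h : IsAhlforsRegular μ d) : μ.IsOpenPosMeasure := by
  obtain ⟨c, hc⟩ := h
  refine ⟨fun U hU ⟨x, hx⟩ hU0 => ?_⟩
  obtain ⟨ε, hε, hball⟩ := nhds_basis_closedBall.mem_iff.1 (hU.mem_nhds hx)
  obtain ⟨r, hr, hr0, hrε⟩ := (hc.and (Ioc_mem_nhdsGT hε)).exists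
  have hnull : μ (closedBall x r) = 0 :=
    measure_mono_null ((closedBall_subset_closedBall hrε).trans hball) hU0
  have hpos : 0 < ENNReal.ofReal (r ^ d) := ENNReal.ofReal_pos.2 (Real.rpow_pos_of_pos hr0 d)
  exact hpos.not_ge (by simpa [hnull] using (hr x).2)

end IsAhlforsRegular

lemma isAhlforsRegular_of_isAddHaarMeasure {E : Type*} [NormedAddCommGroup E] [NormedSpace ℝ E]
    [FiniteDimensional ℝ E] [MeasurableSpace E] [BorelSpace E] (μ : Measure E)
    [μ.IsAddHaarMeasure] : IsAhlforsRegular μ (finrank ℝ E) := by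
  set b := μ (ball (0 : E) 1)
  have hb0 : b ≠ 0 := (measure_ball_pos μ 0 one_pos).ne'
  have hb : b ≠ ∞ := measure_ball_lt_top.ne
  have hle : b ≤ (b + b⁻¹).toNNReal := by
    rw [ENNReal.coe_toNNReal (by finiteness)]; exact le_self_add
  have hinv : b⁻¹ ≤ (b + b⁻¹).toNNReal := by
    rw [ENNReal.coe_toNNReal (by finiteness)]; exact le_add_self
  refine ⟨(b + b⁻¹).toNNReal, ?_⟩
  filter_upwards [self_mem_nhdsWithin] with r (hr : 0 < r) x
  rw [Measure.addHaar_closedBall μ x hr.le, Real.rpow_natCast]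
  refine ⟨by rw [mul_comm]; gcongr, ?_⟩
  calc ENNReal.ofReal (r ^ finrank ℝ E) = b⁻¹ * (ENNReal.ofReal (r ^ finrank ℝ E) * b) := by
        rw [mul_comm, mul_assoc, ENNReal.mul_inv_cancel hb0 hb, mul_one]
    _ ≤ _ := by gcongr

variable {X Y : Type*} [MetricSpace X] [MeasurableSpace X] [BorelSpace X] [MetricSpace Y]
  [MeasurableSpace Y] [BorelSpace Y] {d : ℝ}

lemma eventually_hausdorffMeasure_closedBall_le (hd : 0 ≤ d) (φ : OpenPartialHomeomorph X Y)
    (hφ : LocallyLipschitzOn φ.source φ) (hφsymm : LocallyLipschitzOn φ.target φ.symm)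
    {x : X} (hx : x ∈ φ.source) :
    ∀ᶠ K : ℝ≥0 in atTop, ∀ᶠ r in 𝓝[>] (0 : ℝ),
      μH[d] (closedBall x r) ≤ K ^ d * μH[d] (closedBall (φ x) (K * r)) := by
  obtain ⟨K₁, s, hs, hK₁⟩ := hφ hx
  obtain ⟨K₂, t, ht, hK₂⟩ := hφsymm (φ.map_source hx)
  rw [φ.open_source.nhdsWithin_eq hx] at hs
  rw [φ.open_target.nhdsWithin_eq (φ.map_source hx)] at ht
  filter_upwards [eventually_ge_atTop K₁, eventually_ge_atTop K₂] with K h₁ h₂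
  have hKr : Tendsto (fun r : ℝ => K * r) (𝓝[>] 0) (𝓝 0) := by
    simpa using ((continuous_const_mul (K : ℝ)).tendsto 0).mono_left nhdsWithin_le_nhds
  filter_upwards [hKr.eventually (eventually_closedBall_subset ht),
    nhdsWithin_le_nhds (eventually_closedBall_subset (inter_mem hs (φ.open_source.mem_nhds hx)))]
    with r hrt hrs
  have hsub : closedBall x r ⊆ φ.symm '' closedBall (φ x) (K * r) := fun z hz =>
    ⟨φ z, ((hK₁.weaken h₁).dist_le_mul z (hrs hz).1 x (mem_of_mem_nhds hs)).trans
      (by gcongr; exact hz), φ.left_inv (hrs hz).2⟩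
  exact (measure_mono hsub).trans
    (((hK₂.weaken h₂).mono hrt).hausdorffMeasure_image_le hd)

lemma isAhlforsRegular_hausdorffMeasure_of_chart (hX : ∀ x y : X, ∃ e : X ≃ᵢ X, e x = y)
    (hd : 0 ≤ d) (hY : IsAhlforsRegular (μH[d] : Measure Y) d) (φ : OpenPartialHomeomorph X Y)
    (hφ : LocallyLipschitzOn φ.source φ) (hφsymm : LocallyLipschitzOn φ.target φ.symm)
    {x : X} (hx : x ∈ φ.source) : IsAhlforsRegular (μH[d] : Measure X) d := by
  obtain ⟨c, hc⟩ := hY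
  have hXY := eventually_hausdorffMeasure_closedBall_le hd φ hφ hφsymm hx
  have hYX := eventually_hausdorffMeasure_closedBall_le hd φ.symm hφsymm
    (by rwa [φ.symm_symm]) (φ.map_source hx)
  rw [φ.left_inv hx] at hYX
  obtain ⟨K, ⟨hXY, hYX⟩, hK0⟩ := ((hXY.and hYX).and (eventually_gt_atTop 0)).exists
  have hK0 : (0 : ℝ) < K := hK0
  have hKinv := tendsto_const_mul_nhdsGT_zero (inv_pos.2 hK0)
  have hKd : ENNReal.ofReal ((K : ℝ) ^ d) = (K : ℝ≥0∞) ^ d := by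
    rw [← ENNReal.ofReal_rpow_of_pos hK0, ENNReal.ofReal_coe_nnreal]
  refine ⟨K ^ d * c * K ^ d, ?_⟩
  filter_upwards [hXY, hKinv.eventually hYX,
    (tendsto_const_mul_nhdsGT_zero hK0).eventually hc, hKinv.eventually hc, self_mem_nhdsWithin]
    with r hXYr hYXr hcK hcKinv (hr0 : 0 < r) y
  obtain ⟨e, rfl⟩ := hX x y
  rw [← e.image_closedBall, e.hausdorffMeasure_image]
  simp only [ENNReal.coe_mul, ENNReal.coe_rpow_of_nonneg _ hd]
  constructor
  · calc μH[d] (closedBall x r) ≤ K ^ d * μH[d] (closedBall (φ x) (K * r)) := hXYr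
      _ ≤ K ^ d * (c * ENNReal.ofReal ((K * r) ^ d)) := by gcongr; exact (hcK _).1
      _ = K ^ d * c * K ^ d * ENNReal.ofReal (r ^ d) := by
        rw [Real.mul_rpow hK0.le hr0.le, ENNReal.ofReal_mul (by positivity), hKd]; ring
  · calc ENNReal.ofReal (r ^ d) = K ^ d * ENNReal.ofReal (((K : ℝ)⁻¹ * r) ^ d) := by
          rw [← hKd, ← ENNReal.ofReal_mul (by positivity), ← Real.mul_rpow hK0.le (by positivity),
            mul_inv_cancel_left₀ hK0.ne']
      _ ≤ K ^ d * (c * μH[d] (closedBall (φ x) ((K : ℝ)⁻¹ * r))) := by gcongr; exact (hcKinv _).2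
      _ ≤ K ^ d * (c * (K ^ d * μH[d] (closedBall x r))) := by
        gcongr; simpa [mul_inv_cancel_left₀ hK0.ne'] using hYXr
      _ = K ^ d * c * K ^ d * μH[d] (closedBall x r) := by ring

end AhlforsRegular

section Sphere

variable {E : Type*} [NormedAddCommGroup E] [InnerProductSpace ℝ E]

lemma exists_isometryEquiv_sphere_apply_eq {r : ℝ} (x y : sphere (0 : E) r) :
    ∃ e : sphere (0 : E) r ≃ᵢ sphere (0 : E) r, e x = y := by
  let R := (ℝ ∙ ((x : E) - y))ᗮ.reflection
  have hR (z : E) : z ∈ sphere (0 : E) r ↔ R z ∈ sphere (0 : E) r := by simp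
  refine ⟨⟨R.toEquiv.subtypeEquiv hR, Isometry.of_dist_eq fun a b => R.dist_map a b⟩,
    Subtype.ext (Submodule.reflection_sub ?_)⟩
  rw [norm_eq_of_mem_sphere, norm_eq_of_mem_sphere]

lemma locallyLipschitzOn_stereographic {v : E} (hv : ‖v‖ = 1) :
    LocallyLipschitzOn (stereographic hv).source (stereographic hv) := by
  intro x hx
  have hxv : innerSL ℝ v (x : E) ≠ 1 := fun h => hx (Subtype.ext
    ((inner_eq_one_iff_of_norm_eq_one hv (norm_eq_of_mem_sphere x)).1 h).symm)
  have hopen : IsOpen {y : E | innerSL ℝ v y ≠ 1} :=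
    isOpen_ne.preimage (innerSL ℝ v).continuous
  obtain ⟨K, t, ht, hK⟩ := (contDiffOn_stereoToFun.contDiffAt
    (hopen.mem_nhds hxv)).exists_lipschitzOnWith
  exact ⟨K, Subtype.val ⁻¹' t, nhdsWithin_le_nhds (continuous_subtype_val.continuousAt ht),
    fun a ha b hb => hK ha hb⟩

lemma locallyLipschitz_stereographic_symm {v : E} (hv : ‖v‖ = 1) :
    LocallyLipschitz (stereographic hv).symm := by
  intro w
  obtain ⟨K, t, ht, hK⟩ := (contDiff_stereoInvFunAux (v := v)).locallyLipschitz (w : E)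
  exact ⟨K, Subtype.val ⁻¹' t, continuous_subtype_val.continuousAt ht, fun a ha b hb => hK ha hb⟩

lemma isAhlforsRegular_hausdorffMeasure_sphere [MeasurableSpace E] [BorelSpace E] {n : ℕ}
    [Fact (finrank ℝ E = n + 1)] :
    IsAhlforsRegular (μH[(n : ℝ)] : Measure (sphere (0 : E) 1)) n := by
  have : FiniteDimensional ℝ E := .of_fact_finrank_eq_succ n
  have : Nontrivial E := nontrivial_of_finrank_eq_succ (Fact.out : finrank ℝ E = n + 1)
  obtain ⟨v, hv⟩ := NormedSpace.sphere_nonempty (E := E) (x := 0).2 zero_le_one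
  have hv1 : ‖v‖ = 1 := mem_sphere_zero_iff_norm.1 hv
  have hrank : finrank ℝ (ℝ ∙ v)ᗮ = n :=
    Submodule.finrank_orthogonal_span_singleton (norm_ne_zero_iff.1 (by simp [hv1]))
  have hplane : IsAhlforsRegular (μH[(n : ℝ)] : Measure (ℝ ∙ v)ᗮ) n := by
    simpa only [hrank] using
      isAhlforsRegular_of_isAddHaarMeasure (μH[(finrank ℝ (ℝ ∙ v)ᗮ : ℝ)] : Measure (ℝ ∙ v)ᗮ)
  refine isAhlforsRegular_hausdorffMeasure_of_chart exists_isometryEquiv_sphere_apply_eq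
    n.cast_nonneg hplane (stereographic hv1) (locallyLipschitzOn_stereographic hv1)
    (fun w _ => ?_) (x := -⟨v, hv⟩) ?_
  · simpa using locallyLipschitz_stereographic_symm hv1 w
  · simpa using ne_neg_of_mem_unit_sphere ℝ ⟨v, hv⟩ |>.symm

end Sphere

section Porosity

variable {X : Type*} [PseudoMetricSpace X]

/-- `S` is porous at `x`: at arbitrarily small scales `r`, some ball of radius comparable to `r`
with centre at distance at most `r` from `x` avoids `S`. -/
def IsPorousAt (S : Set X) (x : X) : Prop :=
  ∃ c > 0, ∃ᶠ r in 𝓝[>] (0 : ℝ), ∃ w ∈ closedBall x r, Disjoint S (closedBall w (c * r))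

lemma IsPorousAt.mono {S T : Set X} {x : X} (hT : IsPorousAt T x) (hST : S ⊆ T) :
    IsPorousAt S x := by
  obtain ⟨c, hc, hT⟩ := hT
  exact ⟨c, hc, hT.mono fun r ⟨w, hw, hdisj⟩ => ⟨w, hw, hdisj.mono_left hST⟩⟩

-- The holes of a porous set form a family along which its density, which is zero, would tend to
-- one at almost every point by Lebesgue's theorem for balls that are not centred at the point.
lemma ae_restrict_not_isPorousAt [MeasurableSpace X] [BorelSpace X] [SecondCountableTopology X]
    (μ : Measure X) [IsUnifLocDoublingMeasure μ] [IsLocallyFiniteMeasure μ] (S : Set X) :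
    ∀ᵐ x ∂μ.restrict S, ¬ IsPorousAt S x := by
  filter_upwards [ae_all_iff.2 fun k : ℕ =>
    IsUnifLocDoublingMeasure.ae_tendsto_measure_inter_div μ S k] with x hdensity
  rintro ⟨c, hc, hporous⟩
  obtain ⟨k, hk⟩ := exists_nat_ge c⁻¹
  have : Nonempty X := ⟨x⟩
  choose! w hwx hwS using fun (r : ℝ)
    (h : ∃ w ∈ closedBall x r, Disjoint S (closedBall w (c * r))) => h
  set l := 𝓝[>] (0 : ℝ) ⊓ 𝓟 {r | ∃ w ∈ closedBall x r, Disjoint S (closedBall w (c * r))}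
  have : l.NeBot := frequently_iff_neBot.1 hporous
  have hhole : ∀ᶠ r in l, ∃ w ∈ closedBall x r, Disjoint S (closedBall w (c * r)) :=
    mem_inf_of_right (mem_principal_self _)
  have hscale : Tendsto (fun r => c * r) l (𝓝[>] 0) :=
    (tendsto_const_mul_nhdsGT_zero hc).mono_left inf_le_left
  have hmem : ∀ᶠ r in l, x ∈ closedBall (w r) (k * (c * r)) := by
    filter_upwards [hhole, mem_inf_of_left self_mem_nhdsWithin] with r hr (hr0 : 0 < r)
    have hkc : 1 ≤ k * c := (inv_le_iff_one_le_mul₀ hc).1 hk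
    rw [mem_closedBall, dist_comm, ← mul_assoc]
    exact (mem_closedBall.1 (hwx r hr)).trans (le_mul_of_one_le_left hr0.le hkc)
  have hzero : (fun r => μ (S ∩ closedBall (w r) (c * r)) / μ (closedBall (w r) (c * r)))
      =ᶠ[l] fun _ => 0 := by
    filter_upwards [hhole] with r hr
    rw [(hwS r hr).inter_eq, measure_empty, ENNReal.zero_div]
  exact zero_ne_one (tendsto_nhds_unique (tendsto_const_nhds.congr' hzero.symm)
    (hdensity k w _ hscale hmem))

end Porosity

section RegularClosed

variable {X : Type*} [TopologicalSpace X] [MeasurableSpace X] {μ : Measure X}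

lemma interior_subset_of_measure_union_le [OpensMeasurableSpace X] [μ.IsOpenPosMeasure]
    {C W : Set X} (hC : IsClosed C) (hfin : μ C ≠ ∞) (hle : μ (C ∪ W) ≤ μ C) :
    interior W ⊆ C := by
  have hae : C =ᵐ[μ] (C ∪ W : Set X) := ae_eq_of_subset_of_measure_ge Set.subset_union_left hle
    hC.nullMeasurableSet (hle.trans_lt hfin.lt_top).ne
  have hnull : μ (interior W \ C) = 0 :=
    measure_mono_null (Set.sdiff_subset_sdiff_left (interior_subset.trans Set.subset_union_right))
      (ae_le_set.1 hae.symm.le)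
  exact Set.sdiff_eq_empty.1 ((isOpen_interior.sdiff hC).eq_empty_of_measure_zero hnull)

lemma measure_closure_interior_of_ae_mem_interior {C : Set X} (hC : IsClosed C)
    (h : C ≤ᵐ[μ] interior C) : μ (closure (interior C)) = μ C :=
  (measure_mono hC.closure_interior_subset).antisymm
    ((measure_mono_ae h).trans (measure_mono subset_closure))

end RegularClosed

section Angle

variable {V : Type*} [NormedAddCommGroup V] [InnerProductSpace ℝ V] {x y : V}

lemma norm_sub_sq_eq_two_sub_two_mul_cos_angle (hx : ‖x‖ = 1) (hy : ‖y‖ = 1) :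
    ‖x - y‖ ^ 2 = 2 - 2 * Real.cos (angle x y) := by
  rw [norm_sub_sq_real, cos_angle, hx, hy]; ring

lemma norm_sub_le_angle (hx : ‖x‖ = 1) (hy : ‖y‖ = 1) : ‖x - y‖ ≤ angle x y := by
  refine le_of_sq_le_sq ?_ (angle_nonneg x y)
  linarith [norm_sub_sq_eq_two_sub_two_mul_cos_angle hx hy,
    Real.one_sub_sq_div_two_le_cos (x := angle x y)]

lemma angle_le_pi_div_two_mul_norm_sub (hx : ‖x‖ = 1) (hy : ‖y‖ = 1) :
    angle x y ≤ Real.pi / 2 * ‖x - y‖ := by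
  have hcos := Real.cos_le_one_sub_mul_cos_sq (x := angle x y)
    (by rw [abs_of_nonneg (angle_nonneg x y)]; exact angle_le_pi x y)
  refine le_of_sq_le_sq ?_ (by positivity)
  rw [mul_pow, norm_sub_sq_eq_two_sub_two_mul_cos_angle hx hy]
  have := Real.pi_pos
  field_simp at hcos ⊢
  linarith

-- The geodesic from `y` to `x` is prolonged beyond `x` by the length `θ`.
lemma exists_angle_eq_add (hx : ‖x‖ = 1) (hy : ‖y‖ = 1) (h0 : 0 < angle x y) {θ : ℝ}
    (hθ : 0 ≤ θ) (hθπ : angle x y + θ < Real.pi) :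
    ∃ w : V, ‖w‖ = 1 ∧ angle w x = θ ∧ angle w y = angle x y + θ := by
  set D := angle x y with hD
  have hs : Real.sin D ≠ 0 := (Real.sin_pos_of_pos_of_lt_pi h0 (by linarith)).ne'
  have hxx : ⟪x, x⟫ = 1 := by simp [hx]
  have hyy : ⟪y, y⟫ = 1 := by simp [hy]
  have hxy : ⟪x, y⟫ = Real.cos D := by rw [hD, cos_angle, hx, hy]; simp
  let w : V := (Real.sin D)⁻¹ • (Real.sin (D + θ) • x - Real.sin θ • y)
  have hsin : Real.sin θ = Real.sin (D + θ) * Real.cos D - Real.cos (D + θ) * Real.sin D := by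
    rw [← Real.sin_sub, add_sub_cancel_left]
  have hwx : ⟪w, x⟫ = Real.cos θ := by
    simp only [w, inner_smul_left, inner_sub_left, hxx, real_inner_comm x y, hxy, conj_trivial]
    rw [Real.sin_add]
    field_simp; ring
  have hwy : ⟪w, y⟫ = Real.cos (D + θ) := by
    simp only [w, inner_smul_left, inner_sub_left, hyy, hxy, conj_trivial]
    rw [hsin]
    field_simp; ring
  have hw : ‖w‖ = 1 := by
    have hww : ⟪w, w⟫ = (Real.sin D)⁻¹ * (Real.sin (D + θ) * ⟪w, x⟫ - Real.sin θ * ⟪w, y⟫) := by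
      nth_rw 2 [show w = (Real.sin D)⁻¹ • (Real.sin (D + θ) • x - Real.sin θ • y) from rfl]
      simp only [inner_smul_right, inner_sub_right]
    rw [hwx, hwy, mul_comm (Real.sin θ), ← Real.sin_sub, add_sub_cancel_right,
      inv_mul_cancel₀ hs, real_inner_self_eq_norm_sq] at hww
    exact (pow_eq_one_iff_of_nonneg (norm_nonneg w) two_ne_zero).1 hww
  refine ⟨w, hw, ?_, ?_⟩
  · rw [angle, hw, hx, hwx, mul_one, div_one, Real.arccos_cos hθ (by linarith)]
  · rw [angle, hw, hy, hwy, mul_one, div_one, Real.arccos_cos (by linarith) hθπ.le]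

end Angle

section GeodesicDistance

variable {n : ℕ} {x y z : Sph n} {X : Set (Sph n)} {D ε : ℝ}

instance : Nonempty (Sph n) :=
  (NormedSpace.sphere_nonempty.2 zero_le_one).to_subtype

lemma gd_eq_angle (x y : Sph n) : gd x y = angle (x : Esp n) y := by
  simp [gd, angle]

lemma gd_nonneg (x y : Sph n) : 0 ≤ gd x y := Real.arccos_nonneg _

lemma gd_le_pi (x y : Sph n) : gd x y ≤ Real.pi := Real.arccos_le_pi _

lemma gd_comm (x y : Sph n) : gd x y = gd y x := by
  rw [gd, gd, real_inner_comm]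

@[simp] lemma gd_self (x : Sph n) : gd x x = 0 := by
  simp [gd]

@[simp] lemma gd_neg_self (x : Sph n) : gd (-x) x = Real.pi := by
  simp [gd]

lemma gd_triangle (x y z : Sph n) : gd x z ≤ gd x y + gd y z := by
  simpa only [gd_eq_angle] using angle_le_angle_add_angle (x : Esp n) y z

lemma dist_le_gd (x y : Sph n) : dist x y ≤ gd x y := by
  rw [Subtype.dist_eq, dist_eq_norm, gd_eq_angle]
  exact norm_sub_le_angle (norm_eq_of_mem_sphere x) (norm_eq_of_mem_sphere y)

lemma gd_le_pi_div_two_mul_dist (x y : Sph n) : gd x y ≤ Real.pi / 2 * dist x y := by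
  rw [Subtype.dist_eq, dist_eq_norm, gd_eq_angle]
  exact angle_le_pi_div_two_mul_norm_sub (norm_eq_of_mem_sphere x) (norm_eq_of_mem_sphere y)

lemma continuous_gd_left (y : Sph n) : Continuous fun x => gd x y :=
  Real.continuous_arccos.comp (continuous_subtype_val.inner continuous_const)

lemma isClosed_sphBall (x : Sph n) (ε : ℝ) : IsClosed (sphBall x ε) :=
  isClosed_le (continuous_gd_left x) continuous_const

lemma mem_interior_sphBall (x : Sph n) (hε : 0 < ε) : x ∈ interior (sphBall x ε) :=
  have hsub : {y | gd y x < ε} ⊆ sphBall x ε := fun y (hy : gd y x < ε) => hy.le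
  interior_maximal hsub (isOpen_lt (continuous_gd_left x) continuous_const)
    ((gd_self x).trans_lt hε)

lemma isPorousAt_sphBall (h0 : 0 < gd x y) (hπ : gd x y < Real.pi) :
    IsPorousAt (sphBall y (gd x y)) x := by
  refine ⟨1 / 2, one_half_pos, Eventually.frequently ?_⟩
  filter_upwards [Ioo_mem_nhdsGT (sub_pos.2 hπ)] with r ⟨hr0, hr⟩
  obtain ⟨w, hw, hwx, hwy⟩ := exists_angle_eq_add (norm_eq_of_mem_sphere x)
    (norm_eq_of_mem_sphere y) (by rwa [← gd_eq_angle]) hr0.le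
    (by rw [← gd_eq_angle]; linarith)
  lift w to Sph n using mem_sphere_zero_iff_norm.2 hw
  rw [← gd_eq_angle] at hwx
  rw [← gd_eq_angle, ← gd_eq_angle] at hwy
  refine ⟨w, (dist_le_gd w x).trans hwx.le, Set.disjoint_left.2 fun z hzy hzw => ?_⟩
  have hwz : gd w z < r := calc
    gd w z ≤ Real.pi / 2 * dist w z := gd_le_pi_div_two_mul_dist w z
    _ ≤ Real.pi / 2 * (1 / 2 * r) := by rw [dist_comm]; gcongr; exact hzw
    _ < r := by nlinarith [Real.pi_lt_four]
  have hzy : gd z y ≤ gd x y := hzy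
  linarith [gd_triangle w z y]

lemma gd_le_sphDiam (hx : x ∈ X) (hy : y ∈ X) : gd x y ≤ sphDiam X :=
  le_csSup ⟨Real.pi, by rintro _ ⟨x, -, y, -, rfl⟩; exact gd_le_pi x y⟩ ⟨x, hx, y, hy, rfl⟩

lemma sphDiam_le (hD : 0 ≤ D) (h : ∀ x ∈ X, ∀ y ∈ X, gd x y ≤ D) : sphDiam X ≤ D :=
  Real.sSup_le (by rintro _ ⟨x, hx, y, hy, rfl⟩; exact h x hx y hy) hD

lemma sphDiam_mono {Y : Set (Sph n)} (h : X ⊆ Y) : sphDiam X ≤ sphDiam Y :=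
  sphDiam_le (Real.sSup_nonneg (by rintro _ ⟨x, -, y, -, rfl⟩; exact gd_nonneg x y))
    fun _ hx _ hy => gd_le_sphDiam (h hx) (h hy)

lemma ne_univ_of_sphDiam_lt_pi (h : sphDiam X < Real.pi) : X ≠ Set.univ := by
  rintro rfl
  obtain ⟨x⟩ : Nonempty (Sph n) := inferInstance
  exact (gd_le_sphDiam (Set.mem_univ (-x)) (Set.mem_univ x)).not_gt (by rwa [gd_neg_self])

lemma sphDiam_union_sphBall_le (hX : sphDiam X ≤ D) (hε : 0 ≤ ε) (hεD : 2 * ε ≤ D)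
    (hx : ∀ y ∈ X, gd y x + ε ≤ D) : sphDiam (X ∪ sphBall x ε) ≤ D := by
  have hcross : ∀ y ∈ X, ∀ z ∈ sphBall x ε, gd y z ≤ D := fun y hy z (hz : gd z x ≤ ε) => by
    linarith [gd_triangle y x z, gd_comm x z, hx y hy]
  refine sphDiam_le (by linarith) ?_
  rintro y (hy | hy) z (hz | hz)
  · exact (gd_le_sphDiam hy hz).trans hX
  · exact hcross y hy z hz
  · exact gd_comm y z ▸ hcross z hz y hy
  · have hy : gd y x ≤ ε := hy
    have hz : gd z x ≤ ε := hz
    linarith [gd_triangle y x z, gd_comm x z]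

end GeodesicDistance

section SphVol

variable (n : ℕ)

lemma isAhlforsRegular_sphVol : IsAhlforsRegular (sphVol n) n :=
  have : Fact (finrank ℝ (Esp n) = n + 1) := ⟨finrank_euclideanSpace_fin⟩
  isAhlforsRegular_hausdorffMeasure_sphere

instance : IsUnifLocDoublingMeasure (sphVol n) :=
  (isAhlforsRegular_sphVol n).isUnifLocDoublingMeasure

instance : IsLocallyFiniteMeasure (sphVol n) :=
  (isAhlforsRegular_sphVol n).isLocallyFiniteMeasure

instance : (sphVol n).IsOpenPosMeasure :=
  (isAhlforsRegular_sphVol n).isOpenPosMeasure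

end SphVol

namespace DMaximal

variable {n : ℕ} {D : ℝ} {C : Set (Sph n)} {x : Sph n}

lemma sphVol_le (hC : DMaximal n D C) {X : Set (Sph n)} (hX : IsCompact X)
    (hXD : sphDiam X ≤ D) : sphVol n X ≤ sphVol n C :=
  hC.2.2 ▸ le_sSup ⟨X, hX, hXD, rfl⟩

lemma mem_interior (hC : DMaximal n D C) (hD : 0 < D) (hx : ∀ y ∈ C, gd y x < D) :
    x ∈ interior C := by
  obtain ⟨y, hy, hmax⟩ := (hC.1.insert x).exists_isMaxOn (Set.insert_nonempty x C)
    (continuous_gd_left x).continuousOn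
  set ε := (D - gd y x) / 2 with hε
  have hyD : gd y x < D := by
    rcases hy with rfl | hy
    · simpa using hD
    · exact hx y hy
  have hdiam : sphDiam (C ∪ sphBall x ε) ≤ D :=
    sphDiam_union_sphBall_le hC.2.1 (by linarith) (by linarith [gd_nonneg y x]) fun z hz => by
      have hzy : gd z x ≤ gd y x := hmax (Set.mem_insert_of_mem x hz)
      linarith
  have hsub : interior (sphBall x ε) ⊆ C :=
    interior_subset_of_measure_union_le hC.1.isClosed hC.1.measure_ne_top
      (hC.sphVol_le (hC.1.union (isClosed_sphBall x ε).isCompact) hdiam)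
  exact interior_maximal hsub isOpen_interior (mem_interior_sphBall x (by linarith))

lemma nonempty (hC : DMaximal n D C) (hD : 0 < D) : C.Nonempty := by
  obtain ⟨x⟩ : Nonempty (Sph n) := inferInstance
  rcases C.eq_empty_or_nonempty with rfl | h
  · exact ⟨x, interior_subset (hC.mem_interior hD (by simp))⟩
  · exact h

lemma ae_mem_interior (hC : DMaximal n D C) (hD : 0 < D) (hDπ : D < Real.pi) :
    C ≤ᵐ[sphVol n] interior C := by
  filter_upwards [(ae_restrict_iff' hC.1.measurableSet).1
    (ae_restrict_not_isPorousAt (sphVol n) C)] with x hnonporous hxC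
  by_contra hxint
  obtain ⟨y, hy, hxy⟩ : ∃ y ∈ C, D ≤ gd y x := by
    by_contra! h
    exact hxint (hC.mem_interior hD h)
  have hxy : gd x y = D :=
    ((gd_le_sphDiam hxC hy).trans hC.2.1).antisymm (gd_comm x y ▸ hxy)
  have hball : C ⊆ sphBall y (gd x y) := fun z hz =>
    (gd_le_sphDiam hz hy).trans (hC.2.1.trans hxy.ge)
  exact hnonporous hxC ((isPorousAt_sphBall (hxy ▸ hD) (hxy ▸ hDπ)).mono hball)

lemma closure_interior (hC : DMaximal n D C) (hD : 0 < D) (hDπ : D < Real.pi) :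
    DMaximal n D (closure (interior C)) :=
  have hsub := hC.1.isClosed.closure_interior_subset
  ⟨isClosed_closure.isCompact, (sphDiam_mono hsub).trans hC.2.1,
    (measure_closure_interior_of_ae_mem_interior hC.1.isClosed
      (hC.ae_mem_interior hD hDπ)).trans hC.2.2⟩

end DMaximal

theorem DMaximal_contains_solid_general (n : ℕ) {D : ℝ} (hD : 0 < D) (hDπ : D < Real.pi)
    (C : Set (Sph n)) (hC : DMaximal n D C) :
    ∃ C₀ : Set (Sph n), C₀ ⊆ C ∧ Solid C₀ ∧ DMaximal n D C₀ := by
  have hmax : DMaximal n D (closure (interior C)) := hC.closure_interior hD hDπ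
  exact ⟨closure (interior C), hC.1.isClosed.closure_interior_subset,
    ⟨hmax.nonempty hD, hmax.1, ne_univ_of_sphDiam_lt_pi (hmax.2.1.trans_lt hDπ),
      closure_interior_idem.symm⟩, hmax⟩

/-- every `D`-maximal set with `π/2 < D < π` contains a solid `D`-maximal set. -/
theorem DMaximal_contains_solid (n : ℕ) (hn : 2 ≤ n) (D : ℝ)
    (hD0 : Real.pi / 2 < D) (hD1 : D < Real.pi) (C : Set (Sph n))
    (hC : DMaximal n D C) :
    ∃ C₀ : Set (Sph n), C₀ ⊆ C ∧ Solid C₀ ∧ DMaximal n D C₀ :=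
  DMaximal_contains_solid_general n (Real.pi_div_two_pos.trans hD0) hD1 C hC
end
end
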